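/- Let $X$ be a Borel-measurable, zero-mean Gaussian random element in a separable Banach space $(\mathbb{B},\|\cdot\|)$ with RKHS $(\mathbb{H},\|\cdot\|_{\mathbb{H}})$, and let $f$ be contained in the closure of $\mathbb{H}$ in $\mathbb{B}$. For any $\eps_n>0$ and $\gamma_n\ge1$ satisfying $\inf_{h:\|h-f\|\le\eps_n}\|h\|_{\mathbb{H}}^2-\log\mathbb{P}(\|X\|\le\eps_n)\le\gamma_n$, and for any $C_*\ge1$, there exists a Borel set $B_n\subset\mathbb{B}$ such that $\log N(3\eps_n,B_n,\|\cdot\|)\le6C_*\gamma_n$, $\mathbb{P}(X\notin B_n)\le e^{-C_*\gamma_n}$, and $\mathbb{P}(\|X-f\|\le2\eps_n)\ge e^{-\gamma_n}$. -/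

import Mathlib

open MeasureTheory Real Set Filter
open scoped ENNReal NNReal Topology

noncomputable section

/-- The integral of `f` over `[0,1]`. -/
def intI (f : ℝ → ℝ) : ℝ := ∫ x in Set.Icc (0:ℝ) 1, f x

/-- The `L¹([0,1])` distance between `f` and `g`. -/
def dist1 (f g : ℝ → ℝ) : ℝ := ∫ x in Set.Icc (0:ℝ) 1, |f x - g x|

/-- `∫₀¹ (f-g)₊`. -/
def intPos (f g : ℝ → ℝ) : ℝ := ∫ x in Set.Icc (0:ℝ) 1, max (f x - g x) 0

/-- `f ≤ g` Lebesgue-almost everywhere on `[0,1]`. -/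
def aeLeI (f g : ℝ → ℝ) : Prop :=
  ∀ᵐ x ∂((volume : Measure ℝ).restrict (Set.Icc (0:ℝ) 1)), f x ≤ g x

/-- The intensity measure `λ_f(x,y) = n · 1(f(x) ≤ y)` on `[0,1] × ℝ`. -/
def intensity (n : ℕ) (f : ℝ → ℝ) : Measure (ℝ × ℝ) :=
  ((volume : Measure (ℝ × ℝ)).restrict (Set.Icc (0:ℝ) 1 ×ˢ (Set.univ : Set ℝ))).withDensity
    (fun p => if f p.1 ≤ p.2 then (n : ℝ≥0∞) else 0)

/-- `P` is the law of a Poisson point process with (σ-finite, simple) intensity measure `μ`,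
whose support points are measurably enumerated by `pts`; the law is characterised through its
void probabilities `P(N(A) = 0) = exp(-μ(A))`. -/
def IsPoissonPP {Ω : Type*} [MeasurableSpace Ω] (μ : Measure (ℝ × ℝ)) (P : Measure Ω)
    (pts : Ω → ℕ → ℝ × ℝ) : Prop :=
  IsProbabilityMeasure P ∧ (∀ i, Measurable fun ω => pts ω i) ∧
    ∀ A : Set (ℝ × ℝ), MeasurableSet A →
      P {ω | ∀ i, pts ω i ∉ A} =
        if μ A = ∞ then 0 else ENNReal.ofReal (Real.exp (-(μ A).toReal))

/-- The support boundary detection model: for every `n` and every `f ∈ L¹([0,1])`,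
`P n f` is the law of a Poisson point process with intensity `n · 1(f(x) ≤ y)`,
with support points `(Xᵢ, Yᵢ)ᵢ = pts`. -/
def IsBoundaryModel {Ω : Type*} [MeasurableSpace Ω] (P : ℕ → (ℝ → ℝ) → Measure Ω)
    (pts : Ω → ℕ → ℝ × ℝ) : Prop :=
  ∀ n f, IntegrableOn f (Set.Icc (0:ℝ) 1) → IsPoissonPP (intensity n f) (P n f) pts

/-- The likelihood `e^{n∫f} · 1(∀ i : f(Xᵢ) ≤ Yᵢ)` of `f` given the data `ω`. -/
def lik {Ω : Type*} (n : ℕ) (pts : Ω → ℕ → ℝ × ℝ) (f : ℝ → ℝ) (ω : Ω) : ℝ≥0∞ :=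
  {ω' : Ω | ∀ i, f (pts ω' i).1 ≤ (pts ω' i).2}.indicator
    (fun _ => ENNReal.ofReal (Real.exp (n * intI f))) ω

/-- The posterior mass of the set `B ⊆ Θ` given the data `ω`, for the prior `Pi` on `Θ`
embedded into `L¹([0,1])` via `ι`:
`Π(B | N) = ∫_B e^{n∫f} 1(∀i : f(Xᵢ) ≤ Yᵢ) dΠ(f) / ∫_Θ e^{n∫f} 1(∀i : f(Xᵢ) ≤ Yᵢ) dΠ(f)`. -/
def post {Ω Θ : Type*} [MeasurableSpace Θ] (n : ℕ) (pts : Ω → ℕ → ℝ × ℝ) (Pi : Measure Θ)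
    (ι : Θ → ℝ → ℝ) (B : Set Θ) (ω : Ω) : ℝ≥0∞ :=
  (∫⁻ θ in B, lik n pts (ι θ) ω ∂Pi) / ∫⁻ θ, lik n pts (ι θ) ω ∂Pi

/-- A prior on a Polish space `Θ` which embeds continuously into `L¹([0,1])` via `ι`. -/
def IsL1Prior {Θ : Type*} [MeasurableSpace Θ] [TopologicalSpace Θ] (Pi : Measure Θ)
    (ι : Θ → ℝ → ℝ) : Prop :=
  IsProbabilityMeasure Pi ∧ Measurable (Function.uncurry ι) ∧
    (∀ θ, IntegrableOn (ι θ) (Set.Icc (0:ℝ) 1)) ∧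
    ∀ θ₀, Tendsto (fun θ => dist1 (ι θ) (ι θ₀)) (𝓝 θ₀) (𝓝 0)

/-- A Borel-measurable zero-mean Gaussian random element of a normed space, described through
its law `μ`: every continuous linear functional has a centred Gaussian distribution. -/
def IsCenteredGaussian {E : Type*} [NormedAddCommGroup E] [NormedSpace ℝ E]
    [MeasurableSpace E] (μ : Measure E) : Prop :=
  IsProbabilityMeasure μ ∧
    ∀ L : E →L[ℝ] ℝ, ∃ v : ℝ≥0, μ.map L = ProbabilityTheory.gaussianReal 0 v

/-- The squared RKHS (Cameron–Martin) norm `‖h‖²_ℍ` of the Gaussian law `μ`,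
`‖h‖_ℍ = sup { L(h) : L ∈ E*, E_μ[L²] ≤ 1 }` (`∞` if `h` is not in the RKHS). -/
def cmNormSq {E : Type*} [NormedAddCommGroup E] [NormedSpace ℝ E] [MeasurableSpace E]
    (μ : Measure E) (h : E) : ℝ≥0∞ :=
  ⨆ (L : E →L[ℝ] ℝ) (_ : ∫ x, (L x) ^ 2 ∂μ ≤ 1), ENNReal.ofReal (L h) ^ 2

/-- The `ε`-covering number of a subset `B` of a normed space. -/
def covN {E : Type*} [NormedAddCommGroup E] (ε : ℝ) (B : Set E) : ℕ∞ :=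
  ⨅ (G : Finset E) (_ : ∀ x ∈ B, ∃ g ∈ G, ‖x - g‖ ≤ ε), (G.card : ℕ∞)

/-- The embedding of `C([0,1])` into functions on `ℝ` (extending constantly outside `[0,1]`). -/
def embC (g : C(Set.Icc (0:ℝ) 1, ℝ)) : ℝ → ℝ :=
  fun x => g (Set.projIcc 0 1 zero_le_one x)

/-!
Translating `μ` by a point of the ball of radius `r` of its Cameron–Martin space costs at most a
factor `exp (r ^ 2 / 2)` in the mass of a symmetric set. Hence every `ε`-ball centred in
that Cameron–Martin ball `K` has mass at least `exp (-r ^ 2 / 2) * μ (closedBall 0 ε)`; a packing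
argument bounds the covering numbers of `K`, and so those of `B = K + ε`-ball. The same shift,
applied to a nearly optimal `h` near `f`, gives the small ball bound around `f`.

The complement of `B` is controlled by concentration. By Hahn–Banach, a point outside `B` has
`ε * ‖L‖ + r < L x` for some functional `L` of variance at most `1`, while no point of the `ε`-ball
satisfies `ε * ‖L‖ < L x`. So a supremum `F` of functions `L - ε * ‖L‖` differs by at least `r`
between the two sets. Maurey–Pisier rotation bounds the exponential moments of `F x - F y` under
`μ ⊗ μ`: the difference telescopes along a quarter turn of `E × E`, which preserves `μ ⊗ μ`.
-/

open ProbabilityTheory Metric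

section Gaussian

variable {E : Type*} [NormedAddCommGroup E] [NormedSpace ℝ E] [MeasurableSpace E]
  {μ : Measure E}

lemma mgf_strongDual_eq_exp [IsGaussian μ] (L : StrongDual ℝ E) :
    mgf L μ 1 = exp (μ[L] + Var[L; μ] / 2) := by
  rw [mgf_gaussianReal (IsGaussian.map_eq_gaussianReal L) 1]
  simp [variance_nonneg]

lemma integrable_exp_strongDual [IsGaussian μ] (L : StrongDual ℝ E) :
    Integrable (fun x => exp (L x)) μ := by
  have hpos : 0 < mgf L μ 1 := by rw [mgf_strongDual_eq_exp]; exact exp_pos _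
  simpa only [one_mul] using mgf_pos_iff.1 hpos

/-- The covariance operator `E* → E` of `μ`, whose value at `L` is the barycentre of the centred
identity weighted by the centred `L` (a Bochner integral). -/
def covarianceOperatorDual (μ : Measure E) (L : StrongDual ℝ E) : E :=
  ∫ x, L (x - μ[id]) • (x - μ[id]) ∂μ

lemma integrable_strongDual_smul_sub_integral [IsFiniteMeasure μ] (hμ : MemLp id 2 μ)
    (L : StrongDual ℝ E) : Integrable (fun x => L (x - μ[id]) • (x - μ[id])) μ := by
  have hsub : MemLp (fun x => x - μ[id]) 2 μ := hμ.sub (memLp_const _)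
  exact memLp_one_iff_integrable.1 (hsub.smul (L.comp_memLp' hsub))

variable [BorelSpace E] [CompleteSpace E]

lemma strongDual_covarianceOperatorDual [IsFiniteMeasure μ] (hμ : MemLp id 2 μ)
    (L L' : StrongDual ℝ E) : L' (covarianceOperatorDual μ L) = covarianceBilinDual μ L L' := by
  rw [covarianceOperatorDual, covarianceBilinDual_apply' hμ,
    ← L'.integral_comp_comm (integrable_strongDual_smul_sub_integral hμ L)]
  simp only [map_smul, smul_eq_mul]

lemma isLinearMap_covarianceOperatorDual [IsFiniteMeasure μ] (hμ : MemLp id 2 μ) :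
    IsLinearMap ℝ (covarianceOperatorDual μ) where
  map_add L L' := SeparatingDual.eq_iff_forall_dual_eq (R := ℝ) |>.2 fun T => by
    simp [strongDual_covarianceOperatorDual hμ]
  map_smul c L := SeparatingDual.eq_iff_forall_dual_eq (R := ℝ) |>.2 fun T => by
    simp [strongDual_covarianceOperatorDual hμ]

variable [SecondCountableTopology E]

theorem ext_of_integral_exp_strongDual {ν : Measure E} [IsFiniteMeasure μ] [IsFiniteMeasure ν]
    (hμ : ∀ L : StrongDual ℝ E, Integrable (fun x => exp (L x)) μ)
    (h : ∀ L : StrongDual ℝ E, ∫ x, exp (L x) ∂μ = ∫ x, exp (L x) ∂ν) : μ = ν := by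
  have hzero : μ = 0 ↔ ν = 0 := by
    have hmass : μ.real univ = ν.real univ := by simpa using h 0
    rw [← Measure.measure_univ_eq_zero, ← measureReal_eq_zero_iff, hmass, measureReal_eq_zero_iff,
      Measure.measure_univ_eq_zero]
  refine Measure.ext_of_charFunDual (funext fun L => ?_)
  have hmgf : mgf L μ = mgf L ν := funext fun t => h (t • L)
  have huniv : integrableExpSet L μ = univ := eq_univ_of_forall fun t => hμ (t • L)
  have hstrip := eqOn_complexMGF_of_mgf' hmgf hzero (x := Complex.I) (by simp [huniv])
  simpa [complexMGF, charFunDual_apply, mul_comm] using hstrip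

variable [IsGaussian μ]

lemma integral_exp_strongDual (L : StrongDual ℝ E) :
    ∫ x, exp (L x) ∂μ = exp (μ[L] + covarianceBilinDual μ L L / 2) := by
  rw [covarianceBilinDual_self_eq_variance IsGaussian.memLp_two_id]
  simpa only [mgf, one_mul] using mgf_strongDual_eq_exp (μ := μ) L

lemma lintegral_exp_strongDual (L : StrongDual ℝ E) :
    ∫⁻ x, ENNReal.ofReal (exp (L x)) ∂μ =
      ENNReal.ofReal (exp (μ[L] + covarianceBilinDual μ L L / 2)) := by
  rw [← ofReal_integral_eq_lintegral_ofReal (integrable_exp_strongDual L)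
    (ae_of_all _ fun x => (exp_pos _).le), integral_exp_strongDual]

theorem tilted_strongDual_eq_map_add (L : StrongDual ℝ E) :
    μ.tilted L = μ.map (· + covarianceOperatorDual μ L) := by
  have := isProbabilityMeasure_tilted (integrable_exp_strongDual (μ := μ) L)
  have := Measure.isFiniteMeasure_map μ (· + covarianceOperatorDual μ L)
  refine (ext_of_integral_exp_strongDual (fun T => ?_) fun T => ?_).symm
  · rw [integrable_map_measure (by fun_prop) (by fun_prop)]
    simpa only [Function.comp_def, map_add, exp_add] using
      (integrable_exp_strongDual T).mul_const _
  calc ∫ x, exp (T x) ∂(μ.map (· + covarianceOperatorDual μ L))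
      = exp (μ[T] + covarianceBilinDual μ T T / 2) * exp (covarianceBilinDual μ L T) := by
        rw [integral_map (by fun_prop) (by fun_prop)]
        simp only [map_add, exp_add, integral_mul_const, integral_exp_strongDual,
          strongDual_covarianceOperatorDual IsGaussian.memLp_two_id]
    _ = exp (μ[L + T] + covarianceBilinDual μ (L + T) (L + T) / 2) /
          exp (μ[L] + covarianceBilinDual μ L L / 2) := by
        rw [← exp_add, ← exp_sub, IsGaussian.integral_dual, IsGaussian.integral_dual,
          IsGaussian.integral_dual]
        simp only [map_add, add_apply, covarianceBilinDual_comm T L]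
        ring_nf
    _ = ∫ x, exp (T x) ∂(μ.tilted L) := by
        rw [integral_exp_tilted, ← integral_exp_strongDual, ← integral_exp_strongDual,
          FunLike.coe_add]

lemma isNegInvariant_of_integral_strongDual_eq_zero (hμ : ∀ L : StrongDual ℝ E, μ[L] = 0) :
    μ.IsNegInvariant where
  neg_eq_self := by
    have : IsFiniteMeasure μ.neg := Measure.isFiniteMeasure_map μ Neg.neg
    refine (ext_of_integral_exp_strongDual integrable_exp_strongDual fun L => ?_).symm
    rw [Measure.neg, integral_map (by fun_prop) (by fun_prop), integral_exp_strongDual]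
    simpa [integral_neg, hμ] using (integral_exp_strongDual (μ := μ) (-L)).symm

end Gaussian

lemma measure_le_setLIntegral_exp_of_odd {G : Type*} [AddGroup G] [MeasurableSpace G]
    [MeasurableNeg G] {μ : Measure G} [μ.IsNegInvariant] {φ : G → ℝ} (hφ : Measurable φ)
    (hodd : φ.Odd) {A : Set G} (hA : MeasurableSet A) (hneg : -A = A) :
    μ A ≤ ∫⁻ x in A, ENNReal.ofReal (exp (φ x)) ∂μ := by
  have hsymm : ∫⁻ x in A, ENNReal.ofReal (exp (-φ x)) ∂μ =
      ∫⁻ x in A, ENNReal.ofReal (exp (φ x)) ∂μ := by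
    rw [← (Measure.measurePreserving_neg μ).setLIntegral_comp_preimage hA (by fun_prop)]
    simp only [neg_preimage, hneg, hodd _, neg_neg]
  have htwo : ∀ x, (2 : ℝ≥0∞) ≤ ENNReal.ofReal (exp (φ x)) + ENNReal.ofReal (exp (-φ x)) := by
    intro x
    rw [← ENNReal.ofReal_add (exp_pos _).le (exp_pos _).le, ENNReal.ofNat_le_ofReal]
    have := one_le_cosh (φ x)
    rw [cosh_eq] at this
    linarith
  refine (ENNReal.mul_le_mul_iff_right two_ne_zero ENNReal.ofNat_ne_top).1 ?_
  calc 2 * μ A = ∫⁻ _ in A, 2 ∂μ := (setLIntegral_const _ _).symm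
    _ ≤ ∫⁻ x in A, (ENNReal.ofReal (exp (φ x)) + ENNReal.ofReal (exp (-φ x))) ∂μ :=
        lintegral_mono htwo
    _ = 2 * ∫⁻ x in A, ENNReal.ofReal (exp (φ x)) ∂μ := by
        rw [lintegral_add_left (by fun_prop), hsymm, two_mul]

theorem ofReal_exp_mul_measure_le_measure_preimage_add {E : Type*} [NormedAddCommGroup E]
    [NormedSpace ℝ E] [CompleteSpace E] [SecondCountableTopology E] [MeasurableSpace E]
    [BorelSpace E] {μ : Measure E} [IsGaussian μ] (hμ : ∀ L : StrongDual ℝ E, μ[L] = 0)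
    (L : StrongDual ℝ E) {A : Set E} (hA : MeasurableSet A) (hneg : -A = A) :
    ENNReal.ofReal (exp (-covarianceBilinDual μ L L / 2)) * μ A ≤
      μ ((· + covarianceOperatorDual μ L) ⁻¹' A) := by
  have := isNegInvariant_of_integral_strongDual_eq_zero hμ
  rw [← Measure.map_apply (by fun_prop) hA, ← tilted_strongDual_eq_map_add, tilted_apply' _ _ hA,
    integral_exp_strongDual, hμ, zero_add]
  calc ENNReal.ofReal (exp (-covarianceBilinDual μ L L / 2)) * μ A
      ≤ ENNReal.ofReal (exp (-covarianceBilinDual μ L L / 2)) *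
          ∫⁻ x in A, ENNReal.ofReal (exp (L x)) ∂μ := by
        gcongr
        exact measure_le_setLIntegral_exp_of_odd (by fun_prop) (map_neg L) hA hneg
    _ = ∫⁻ x in A, ENNReal.ofReal (exp (L x) / exp (covarianceBilinDual μ L L / 2)) ∂μ := by
        rw [← lintegral_const_mul _ (by fun_prop)]
        simp only [neg_div, exp_neg, div_eq_inv_mul (exp _),
          ENNReal.ofReal_mul (inv_pos.2 (exp_pos _)).le]

section CameronMartinBall

variable {E : Type*} [NormedAddCommGroup E] [NormedSpace ℝ E]

lemma mul_norm_le_of_forall_mem_closedBall {L : StrongDual ℝ E} {ε c : ℝ} (hε : 0 ≤ ε)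
    (h : ∀ b ∈ closedBall 0 ε, L b ≤ c) : ε * ‖L‖ ≤ c := by
  have hc : 0 ≤ c := by simpa using h 0 (mem_closedBall_self hε)
  suffices ‖ε • L‖ ≤ c by rwa [norm_smul, norm_of_nonneg hε] at this
  refine ContinuousLinearMap.opNorm_le_of_unit_norm hc fun x hx => abs_le'.2 ⟨?_, ?_⟩
  · simpa using h (ε • x) (by simp [norm_smul, hx, abs_of_nonneg hε])
  · simpa using h (-(ε • x)) (by simp [norm_smul, hx, abs_of_nonneg hε])

variable [MeasurableSpace E] [BorelSpace E] {μ : Measure E}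

lemma convexOn_covarianceBilinDual_self :
    ConvexOn ℝ univ fun L : StrongDual ℝ E => covarianceBilinDual μ L L := by
  refine ⟨convex_univ, fun L _ L' _ a b ha hb hab => ?_⟩
  obtain rfl : b = 1 - a := by linarith
  have hdiff := mul_nonneg (mul_nonneg ha hb) (covarianceBilinDual_self_nonneg (μ := μ) (L - L'))
  simp only [map_add, map_sub, map_smul, add_apply, sub_apply, smul_apply, smul_eq_mul,
    covarianceBilinDual_comm L' L] at hdiff ⊢
  linarith

lemma exists_covarianceBilinDual_smul_self_le_one {L : StrongDual ℝ E} {r a : ℝ}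
    (h : r * √(covarianceBilinDual μ L L) < a) :
    ∃ s > 0, covarianceBilinDual μ (s • L) (s • L) ≤ 1 ∧ r < s * a := by
  have hnear : ∀ᶠ t in 𝓝[>] √(covarianceBilinDual μ L L), r * t < a :=
    ((continuous_const_mul r).tendsto _).mono_left nhdsWithin_le_nhds |>.eventually_lt_const h
  obtain ⟨t, hta, ht⟩ := (hnear.and self_mem_nhdsWithin).exists
  have ht0 : 0 < t := (sqrt_nonneg _).trans_lt ht
  refine ⟨t⁻¹, inv_pos.2 ht0, ?_, by rwa [lt_inv_mul_iff₀ ht0, mul_comm]⟩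
  calc covarianceBilinDual μ (t⁻¹ • L) (t⁻¹ • L) = covarianceBilinDual μ L L / t ^ 2 := by
        simp only [map_smul, smul_apply, smul_eq_mul]
        ring
    _ ≤ 1 := div_le_one_of_le₀ ((sqrt_le_left ht0.le).1 ht.le) (sq_nonneg t)

/-- The points `covarianceOperatorDual μ L` with `L` of variance at most `r ^ 2`: a convex dense
part of the ball of radius `r` in the Cameron–Martin space of `μ`. -/
def cameronMartinBall (μ : Measure E) (r : ℝ) : Set E :=
  covarianceOperatorDual μ '' {L | covarianceBilinDual μ L L ≤ r ^ 2}

variable [CompleteSpace E] [IsFiniteMeasure μ]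

lemma convex_cameronMartinBall (hμ : MemLp id 2 μ) (r : ℝ) :
    Convex ℝ (cameronMartinBall μ r) := by
  have hconv := (convexOn_covarianceBilinDual_self (μ := μ)).convex_le (r ^ 2)
  simp only [mem_univ, true_and] at hconv
  exact hconv.is_linear_image (isLinearMap_covarianceOperatorDual hμ)

lemma exists_mem_cameronMartinBall_apply_eq (hμ : MemLp id 2 μ) (r : ℝ) (L : StrongDual ℝ E) :
    ∃ k ∈ cameronMartinBall μ r, L k = r * √(covarianceBilinDual μ L L) := by
  set v := covarianceBilinDual μ L L with hv
  have hv0 : 0 ≤ v := covarianceBilinDual_self_nonneg L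
  refine ⟨_, mem_image_of_mem _ (x := (r / √v) • L) ?_, ?_⟩
  · calc covarianceBilinDual μ ((r / √v) • L) ((r / √v) • L) = r ^ 2 * (v / v) := by
          simp only [map_smul, smul_apply, smul_eq_mul, ← hv]
          rw [← mul_assoc, ← sq, div_pow, sq_sqrt hv0, div_mul_eq_mul_div, mul_div_assoc]
      _ ≤ r ^ 2 := mul_le_of_le_one_right (sq_nonneg r) (div_self_le_one v)
  · rw [strongDual_covarianceOperatorDual hμ, map_smul, smul_apply, ← hv, smul_eq_mul,
      div_mul_eq_mul_div, mul_div_assoc, div_sqrt]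

lemma exists_strongDual_lt_of_notMem_cthickening (hμ : MemLp id 2 μ) {r ε : ℝ} (hε : 0 ≤ ε)
    {x : E} (hx : x ∉ cthickening ε (cameronMartinBall μ r)) :
    ∃ L : StrongDual ℝ E, covarianceBilinDual μ L L ≤ 1 ∧ ε * ‖L‖ + r < L x := by
  obtain ⟨L, u, hLu, hux⟩ := geometric_hahn_banach_closed_point
    ((convex_cameronMartinBall hμ r).cthickening ε) isClosed_cthickening hx
  obtain ⟨k, hk, hLk⟩ := exists_mem_cameronMartinBall_apply_eq hμ r L
  have hnorm : ε * ‖L‖ ≤ u - L k := by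
    refine mul_norm_le_of_forall_mem_closedBall hε fun b hb => ?_
    have := hLu (k + b) (mem_cthickening_of_dist_le _ k _ _ hk (by simpa using hb))
    rw [map_add] at this
    linarith
  obtain ⟨s, hs, hsL, hsr⟩ := exists_covarianceBilinDual_smul_self_le_one (μ := μ) (L := L)
    (r := r) (a := L x - ε * ‖L‖) (by linarith)
  refine ⟨s • L, hsL, ?_⟩
  rw [norm_smul, norm_of_nonneg hs.le, smul_apply, smul_eq_mul]
  linarith

end CameronMartinBall

section RKHSNorm

variable {E : Type*} [NormedAddCommGroup E] [NormedSpace ℝ E] [CompleteSpace E]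
  [SecondCountableTopology E] [MeasurableSpace E] [BorelSpace E] {μ : Measure E} [IsGaussian μ]

lemma integral_strongDual_sq_eq_covarianceBilinDual (hμ : ∀ L : StrongDual ℝ E, μ[L] = 0)
    (L : StrongDual ℝ E) : ∫ x, L x ^ 2 ∂μ = covarianceBilinDual μ L L := by
  rw [covarianceBilinDual_self_eq_variance IsGaussian.memLp_two_id,
    variance_of_integral_eq_zero (by fun_prop) (hμ L)]

lemma mem_closure_cameronMartinBall_of_cmNormSq_le (hμ : ∀ L : StrongDual ℝ E, μ[L] = 0)
    {h : E} {r : ℝ} (hr : 0 ≤ r) (hh : cmNormSq μ h ≤ ENNReal.ofReal (r ^ 2)) :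
    h ∈ closure (cameronMartinBall μ r) := by
  by_contra hmem
  rw [← cthickening_zero] at hmem
  obtain ⟨L, hL, hrL⟩ :=
    exists_strongDual_lt_of_notMem_cthickening IsGaussian.memLp_two_id le_rfl hmem
  rw [zero_mul, zero_add] at hrL
  rw [← integral_strongDual_sq_eq_covarianceBilinDual hμ] at hL
  have hLh : ENNReal.ofReal (L h) ^ 2 ≤ cmNormSq μ h :=
    le_iSup₂ (f := fun (T : E →L[ℝ] ℝ) (_ : ∫ x, T x ^ 2 ∂μ ≤ 1) => ENNReal.ofReal (T h) ^ 2) L hL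
  rw [← ENNReal.ofReal_pow (hr.trans hrL.le)] at hLh
  have := (ENNReal.ofReal_le_ofReal_iff (sq_nonneg r)).1 (hLh.trans hh)
  exact this.not_gt (by gcongr)

end RKHSNorm

section SmallBall

lemma tendsto_measure_closedBall_nhdsGT {X : Type*} [PseudoMetricSpace X] [MeasurableSpace X]
    [OpensMeasurableSpace X] (μ : Measure X) [IsFiniteMeasure μ] (x : X) (r : ℝ) :
    Tendsto (fun s => μ (closedBall x s)) (𝓝[>] r) (𝓝 (μ (closedBall x r))) := by
  rw [← biInter_gt_closedBall x r]
  exact tendsto_measure_biInter_gt (fun s _ => measurableSet_closedBall.nullMeasurableSet)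
    (fun s t _ hst => closedBall_subset_closedBall hst) ⟨r + 1, by simp, measure_ne_top _ _⟩

lemma isClosed_setOf_le_measure_closedBall {X : Type*} [PseudoMetricSpace X] [MeasurableSpace X]
    [OpensMeasurableSpace X] (μ : Measure X) [IsFiniteMeasure μ] (r : ℝ) (c : ℝ≥0∞) :
    IsClosed {x | c ≤ μ (closedBall x r)} := by
  refine isClosed_of_closure_subset fun x hx => ?_
  refine ge_of_tendsto (tendsto_measure_closedBall_nhdsGT μ x r) ?_
  filter_upwards [self_mem_nhdsWithin] with s (hs : r < s)
  obtain ⟨y, hy, hxy⟩ := mem_closure_iff.1 hx (s - r) (sub_pos.2 hs)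
  exact le_trans hy (measure_mono (closedBall_subset_closedBall' (by rw [dist_comm]; linarith)))

variable {E : Type*} [NormedAddCommGroup E] [NormedSpace ℝ E] [CompleteSpace E]
  [SecondCountableTopology E] [MeasurableSpace E] [BorelSpace E] {μ : Measure E} [IsGaussian μ]

lemma ofReal_exp_mul_le_measure_closedBall_of_mem_closure (hμ : ∀ L : StrongDual ℝ E, μ[L] = 0)
    {r : ℝ} {h : E} (hh : h ∈ closure (cameronMartinBall μ r)) (ε : ℝ) :
    ENNReal.ofReal (exp (-r ^ 2 / 2)) * μ (closedBall 0 ε) ≤ μ (closedBall h ε) := by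
  refine closure_minimal ?_ (isClosed_setOf_le_measure_closedBall μ ε _) hh
  rintro _ ⟨L, hL : covarianceBilinDual μ L L ≤ r ^ 2, rfl⟩
  calc ENNReal.ofReal (exp (-r ^ 2 / 2)) * μ (closedBall 0 ε)
      ≤ ENNReal.ofReal (exp (-covarianceBilinDual μ (-L) (-L) / 2)) * μ (closedBall 0 ε) := by
        simp only [map_neg, neg_apply, neg_neg]
        gcongr
    _ ≤ μ ((· + covarianceOperatorDual μ (-L)) ⁻¹' closedBall 0 ε) :=
        ofReal_exp_mul_measure_le_measure_preimage_add hμ _ measurableSet_closedBall (by simp)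
    _ = μ (closedBall (covarianceOperatorDual μ L) ε) := by
        rw [(isLinearMap_covarianceOperatorDual IsGaussian.memLp_two_id).map_neg]
        congr 1
        ext x
        simp [dist_eq_norm, ← sub_eq_add_neg]

theorem ofReal_exp_mul_le_measure_closedBall_of_iInf_cmNormSq
    (hμ : ∀ L : StrongDual ℝ E, μ[L] = 0) {f : E} {δ : ℝ}
    (hI : ⨅ h ∈ {h : E | ‖h - f‖ ≤ δ}, cmNormSq μ h ≠ ∞) (ε : ℝ) :
    ENNReal.ofReal (exp (-(⨅ h ∈ {h : E | ‖h - f‖ ≤ δ}, cmNormSq μ h).toReal / 2)) *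
      μ (closedBall 0 ε) ≤ μ (closedBall f (δ + ε)) := by
  set I := ⨅ h ∈ {h : E | ‖h - f‖ ≤ δ}, cmNormSq μ h
  have hlim : Tendsto (fun t => ENNReal.ofReal (exp (-t / 2)) * μ (closedBall 0 ε))
      (𝓝[>] I.toReal) (𝓝 (ENNReal.ofReal (exp (-I.toReal / 2)) * μ (closedBall 0 ε))) :=
    ENNReal.Tendsto.mul_const ((ENNReal.continuous_ofReal.comp (by fun_prop :
      Continuous fun t : ℝ => exp (-t / 2))).tendsto _ |>.mono_left nhdsWithin_le_nhds)
      (.inr (measure_ne_top _ _))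
  refine le_of_tendsto hlim ?_
  filter_upwards [self_mem_nhdsWithin] with t (ht : I.toReal < t)
  have ht0 : 0 ≤ t := ENNReal.toReal_nonneg.trans ht.le
  obtain ⟨h, hhf, hht⟩ : ∃ h, ‖h - f‖ ≤ δ ∧ cmNormSq μ h < ENNReal.ofReal t := by
    simpa only [I, iInf_lt_iff, mem_ofPred_eq, exists_prop] using
      (ENNReal.lt_ofReal_iff_toReal_lt hI).2 ht
  have hmem : h ∈ closure (cameronMartinBall μ √t) :=
    mem_closure_cameronMartinBall_of_cmNormSq_le hμ (sqrt_nonneg t) <| by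
      rw [sq_sqrt ht0]
      exact hht.le
  calc ENNReal.ofReal (exp (-t / 2)) * μ (closedBall 0 ε)
      = ENNReal.ofReal (exp (-√t ^ 2 / 2)) * μ (closedBall 0 ε) := by rw [sq_sqrt ht0]
    _ ≤ μ (closedBall h ε) := ofReal_exp_mul_le_measure_closedBall_of_mem_closure hμ hmem ε
    _ ≤ μ (closedBall f (δ + ε)) :=
        measure_mono (closedBall_subset_closedBall' (by rw [dist_eq_norm]; linarith))

-- Two independent copies near a point of the support have a small difference, which a rotation by
-- `-(π / 4)` turns into `√2` times a copy of `μ`.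
theorem measure_ball_zero_pos (hμ : ∀ L : StrongDual ℝ E, μ[L] = 0) {ε : ℝ} (hε : 0 < ε) :
    0 < μ (ball 0 ε) := by
  obtain ⟨x, hx⟩ := Measure.nonempty_support (IsProbabilityMeasure.ne_zero μ)
  have hball : 0 < μ (ball x (ε / 2)) :=
    (Measure.mem_support_iff_forall x).1 hx _ (ball_mem_nhds x (half_pos hε))
  let R : E × E →L[ℝ] E × E := ContinuousLinearMap.rotation (-(π / 4))
  have hR : (μ.prod μ).map R = μ.prod μ :=
    IsGaussian.map_rotation_eq_self_of_forall_strongDual_eq_zero hμ _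
  have hfst (p : E × E) : (R p).1 = (√2 / 2) • (p.1 - p.2) := by
    simp [R, ContinuousLinearMap.rotation_apply, sub_eq_add_neg]
  have hsub : ball x (ε / 2) ×ˢ ball x (ε / 2) ⊆ R ⁻¹' (ball 0 ε ×ˢ univ) := by
    rintro p ⟨hy, hz⟩
    have hyz : dist p.1 p.2 < ε := (dist_triangle_right _ _ x).trans_lt
      (by linarith [mem_ball.1 hy, mem_ball.1 hz])
    have hsqrt : √2 / 2 ≤ 1 := by
      rw [div_le_one two_pos, sqrt_le_left two_pos.le]
      norm_num
    refine ⟨?_, mem_univ _⟩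
    rw [mem_ball_zero_iff, hfst, norm_smul, norm_of_nonneg (by positivity), ← dist_eq_norm]
    exact (mul_le_of_le_one_left dist_nonneg hsqrt).trans_lt hyz
  calc 0 < μ (ball x (ε / 2)) * μ (ball x (ε / 2)) := ENNReal.mul_pos hball.ne' hball.ne'
    _ = μ.prod μ (ball x (ε / 2) ×ˢ ball x (ε / 2)) := (Measure.prod_prod _ _).symm
    _ ≤ μ.prod μ (R ⁻¹' (ball 0 ε ×ˢ univ)) := measure_mono hsub
    _ = μ (ball 0 ε) := by
        rw [← Measure.map_apply (by fun_prop) (measurableSet_ball.prod .univ), hR,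
          Measure.prod_prod, measure_univ, mul_one]

end SmallBall

section Concentration

lemma exists_measurable_forall_le {α ι : Type*} [MeasurableSpace α] [MeasurableSpace ι]
    [MeasurableSingletonClass ι] [Finite ι] [Nonempty ι] {F : ι → α → ℝ}
    (hF : ∀ i, Measurable (F i)) : ∃ i : α → ι, Measurable i ∧ ∀ x j, F j x ≤ F (i x) x := by
  classical
  obtain ⟨e, he⟩ := exists_surjective_nat ι
  have hmax (x : α) : ∃ k, ∀ j, F j x ≤ F (e k) x := he.exists.1 (Finite.exists_max fun i => F i x)
  refine ⟨fun x => e (Nat.find (hmax x)),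
    measurable_from_nat.comp (measurable_find hmax fun k => ?_),
    fun x => Nat.find_spec (hmax x)⟩
  simp only [ofPred_forall]
  exact .iInter fun j => measurableSet_le (hF j) (hF (e k))

variable {E : Type*} [NormedAddCommGroup E] [NormedSpace ℝ E]

lemma rotation_add_fst (θ δ : ℝ) (p : E × E) :
    (ContinuousLinearMap.rotation (θ + δ) p).1 =
      cos δ • (ContinuousLinearMap.rotation θ p).1 +
        sin δ • (ContinuousLinearMap.rotation θ p).2 := by
  simp only [ContinuousLinearMap.rotation_apply, cos_add, sin_add]
  module

lemma sub_eq_sum_sub_rotation (F : E → ℝ) {n : ℕ} (hn : n ≠ 0) (p : E × E) :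
    F p.1 - F p.2 = ∑ k ∈ Finset.range n,
      (F (ContinuousLinearMap.rotation (k * (π / (2 * n))) p).1 -
        F (cos (π / (2 * n)) • (ContinuousLinearMap.rotation (k * (π / (2 * n))) p).1 +
          sin (π / (2 * n)) • (ContinuousLinearMap.rotation (k * (π / (2 * n))) p).2)) := by
  have hquarter : (n : ℝ) * (π / (2 * n)) = π / 2 := by field_simp
  simp only [← rotation_add_fst, ← add_one_mul, ← Nat.cast_succ]
  rw [Finset.sum_range_sub' fun k : ℕ => F (ContinuousLinearMap.rotation (k * (π / (2 * n))) p).1,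
    hquarter]
  simp [ContinuousLinearMap.rotation_apply]

lemma exp_sum_le_average_exp {n : ℕ} (hn : n ≠ 0) (u : ℕ → ℝ) :
    exp (∑ k ∈ Finset.range n, u k) ≤ (∑ k ∈ Finset.range n, exp (n * u k)) / n := by
  have := convexOn_exp.map_sum_le (t := Finset.range n) (w := fun _ => (n : ℝ)⁻¹)
    (p := fun k => n * u k) (fun _ _ => by positivity) (by simp [hn]) (fun _ _ => mem_univ _)
  simpa [hn, ← Finset.mul_sum, div_eq_inv_mul] using this

variable [MeasurableSpace E] [BorelSpace E] [SecondCountableTopology E]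

lemma lintegral_exp_sub_le_lintegral_exp_sub_rotation {ρ : Measure (E × E)}
    (hρ : ∀ θ, ρ.map (ContinuousLinearMap.rotation θ) = ρ) {F : E → ℝ} (hF : Measurable F)
    (l : ℝ) {n : ℕ} (hn : n ≠ 0) :
    ∫⁻ p, ENNReal.ofReal (exp (l * (F p.1 - F p.2))) ∂ρ ≤
      ∫⁻ p, ENNReal.ofReal (exp (n * l *
        (F p.1 - F (cos (π / (2 * n)) • p.1 + sin (π / (2 * n)) • p.2)))) ∂ρ := by
  set G : E × E → ℝ := fun p => F p.1 - F (cos (π / (2 * n)) • p.1 + sin (π / (2 * n)) • p.2)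
  have hG : Measurable G := by fun_prop
  have hn0 : (0 : ℝ) < n := by positivity
  set R : ℕ → E × E →L[ℝ] E × E := fun k => ContinuousLinearMap.rotation (k * (π / (2 * n)))
  have hR (k : ℕ) : MeasurePreserving (R k) ρ ρ := ⟨(R k).measurable, hρ _⟩
  calc ∫⁻ p, ENNReal.ofReal (exp (l * (F p.1 - F p.2))) ∂ρ
      ≤ ∫⁻ p, ENNReal.ofReal (∑ k ∈ Finset.range n, exp (n * l * G (R k p)) / n) ∂ρ := by
        gcongr with p
        rw [sub_eq_sum_sub_rotation F hn, Finset.mul_sum, ← Finset.sum_div]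
        simpa only [mul_assoc] using exp_sum_le_average_exp hn fun k => l * G (R k p)
    _ = ∑ k ∈ Finset.range n, ∫⁻ p, ENNReal.ofReal (exp (n * l * G (R k p)) / n) ∂ρ := by
        simp only [ENNReal.ofReal_sum_of_nonneg fun _ _ => div_nonneg (exp_pos _).le hn0.le]
        exact lintegral_finsetSum _ fun k _ => by fun_prop
    _ = n * ∫⁻ p, ENNReal.ofReal (exp (n * l * G p) / n) ∂ρ := by
        rw [Finset.sum_congr rfl fun k _ => (hR k).lintegral_comp
          (f := fun p => ENNReal.ofReal (exp (n * l * G p) / n)) (by fun_prop), Finset.sum_const,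
          Finset.card_range, nsmul_eq_mul]
    _ = ∫⁻ p, ENNReal.ofReal (exp (n * l * G p)) ∂ρ := by
        rw [← lintegral_const_mul _ (by fun_prop)]
        simp only [← ENNReal.ofReal_natCast n, ← ENNReal.ofReal_mul hn0.le,
          mul_div_cancel₀ _ hn0.ne']

lemma exp_mul_le_one_add {c : ℝ} (hc0 : 0 ≤ c) (hc1 : c ≤ 1) (u : ℝ) :
    exp (c * u) ≤ 1 + c * exp u := by
  have := convexOn_exp.2 (mem_univ 0) (mem_univ u) (sub_nonneg.2 hc1) hc0 (by ring)
  simp only [smul_eq_mul, mul_zero, zero_add, exp_zero, mul_one] at this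
  linarith

variable [CompleteSpace E] {μ : Measure E} [IsGaussian μ]

lemma lintegral_exp_sub_apply_le (hμ : ∀ L : StrongDual ℝ E, μ[L] = 0) {L : E → StrongDual ℝ E}
    {v : ℝ} (hv : ∀ x, covarianceBilinDual μ (L x) (L x) ≤ v)
    (hL : Measurable fun p : E × E => L p.1 p.2) {c : ℝ} (hc0 : 0 ≤ c) (hc1 : c ≤ 1) (s : ℝ) :
    ∫⁻ p, ENNReal.ofReal (exp (c * L p.1 p.1 - s * L p.1 p.2)) ∂(μ.prod μ) ≤
      ENNReal.ofReal (exp (s ^ 2 * v / 2)) *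
        (1 + ENNReal.ofReal c * ∫⁻ x, ENNReal.ofReal (exp (L x x)) ∂μ) := by
  have : Measurable fun x => L x x := hL.comp (measurable_id.prodMk measurable_id)
  have hinner (x : E) : ∫⁻ y, ENNReal.ofReal (exp (-(s * L x y))) ∂μ ≤
      ENNReal.ofReal (exp (s ^ 2 * v / 2)) := by
    calc ∫⁻ y, ENNReal.ofReal (exp (-(s * L x y))) ∂μ
        = ENNReal.ofReal (exp (s ^ 2 * covarianceBilinDual μ (L x) (L x) / 2)) := by
          simpa [← mul_assoc, ← sq, integral_neg, integral_const_mul, hμ] using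
            lintegral_exp_strongDual (μ := μ) (-s • L x)
      _ ≤ ENNReal.ofReal (exp (s ^ 2 * v / 2)) := by
          gcongr
          exact hv x
  calc ∫⁻ p, ENNReal.ofReal (exp (c * L p.1 p.1 - s * L p.1 p.2)) ∂(μ.prod μ)
      = ∫⁻ x, ∫⁻ y, ENNReal.ofReal (exp (c * L x x)) *
          ENNReal.ofReal (exp (-(s * L x y))) ∂μ ∂μ := by
        rw [lintegral_prod _ (by fun_prop)]
        simp only [sub_eq_add_neg, exp_add, ENNReal.ofReal_mul (exp_pos _).le]
    _ ≤ ∫⁻ x, ENNReal.ofReal (1 + c * exp (L x x)) *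
          ENNReal.ofReal (exp (s ^ 2 * v / 2)) ∂μ := by
        gcongr with x
        rw [lintegral_const_mul _ (by fun_prop)]
        gcongr
        · exact exp_mul_le_one_add hc0 hc1 _
        · exact hinner x
    _ = _ := by
        rw [lintegral_mul_const _ (by fun_prop), mul_comm]
        simp only [ENNReal.ofReal_add zero_le_one (mul_nonneg hc0 (exp_pos _).le),
          ENNReal.ofReal_mul hc0, ENNReal.ofReal_one]
        rw [lintegral_add_left measurable_const, lintegral_const_mul _ (by fun_prop)]
        simp

lemma lintegral_exp_sub_rotation_le (hμ : ∀ L : StrongDual ℝ E, μ[L] = 0) {F : E → ℝ}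
    {L : E → StrongDual ℝ E} (hFL : ∀ x y, F x - F y ≤ L x (x - y)) {v : ℝ}
    (hv : ∀ x, covarianceBilinDual μ (L x) (L x) ≤ v)
    (hL : Measurable fun p : E × E => L p.1 p.2) {t δ : ℝ} (ht : 0 ≤ t) (htδ : t * δ ^ 2 / 2 ≤ 1) :
    ∫⁻ p, ENNReal.ofReal (exp (t * (F p.1 - F (cos δ • p.1 + sin δ • p.2)))) ∂(μ.prod μ) ≤
      ENNReal.ofReal (exp ((t * δ) ^ 2 * v / 2)) * (1 + ENNReal.ofReal (t * δ ^ 2 / 2) *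
        ∫⁻ x, ENNReal.ofReal (exp (L x x)) ∂μ) := by
  have hv0 : 0 ≤ v := (covarianceBilinDual_self_nonneg _).trans (hv 0)
  have hcos : t * (1 - cos δ) ≤ t * δ ^ 2 / 2 := by
    rw [mul_div_assoc]
    gcongr
    linarith [one_sub_sq_div_two_le_cos (x := δ)]
  have hsin : (t * sin δ) ^ 2 ≤ (t * δ) ^ 2 := by
    rw [mul_pow, mul_pow]
    exact mul_le_mul_of_nonneg_left (sq_le_sq.2 abs_sin_le_abs) (sq_nonneg t)
  have hstep (p : E × E) : t * (F p.1 - F (cos δ • p.1 + sin δ • p.2)) ≤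
      t * (1 - cos δ) * L p.1 p.1 - t * sin δ * L p.1 p.2 := by
    have hsub := mul_le_mul_of_nonneg_left (hFL p.1 (cos δ • p.1 + sin δ • p.2)) ht
    simp only [map_sub, map_add, map_smul, smul_eq_mul] at hsub
    linarith
  calc ∫⁻ p, ENNReal.ofReal (exp (t * (F p.1 - F (cos δ • p.1 + sin δ • p.2)))) ∂(μ.prod μ)
      ≤ ∫⁻ p, ENNReal.ofReal (exp (t * (1 - cos δ) * L p.1 p.1 - t * sin δ * L p.1 p.2))
          ∂(μ.prod μ) := by
        gcongr with p
        exact hstep p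
    _ ≤ ENNReal.ofReal (exp ((t * sin δ) ^ 2 * v / 2)) *
          (1 + ENNReal.ofReal (t * (1 - cos δ)) * ∫⁻ x, ENNReal.ofReal (exp (L x x)) ∂μ) :=
        lintegral_exp_sub_apply_le hμ hv hL (mul_nonneg ht (sub_nonneg.2 (cos_le_one δ)))
          (hcos.trans htδ) _
    _ ≤ _ := by gcongr

theorem lintegral_exp_sub_le (hμ : ∀ L : StrongDual ℝ E, μ[L] = 0) {F : E → ℝ}
    (hF : Measurable F) {L : E → StrongDual ℝ E} (hFL : ∀ x y, F x - F y ≤ L x (x - y)) {v : ℝ}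
    (hv : ∀ x, covarianceBilinDual μ (L x) (L x) ≤ v)
    (hL : Measurable fun p : E × E => L p.1 p.2)
    (hexp : ∫⁻ x, ENNReal.ofReal (exp (L x x)) ∂μ ≠ ∞) {l : ℝ} (hl : 0 ≤ l) :
    ∫⁻ p, ENNReal.ofReal (exp (l * (F p.1 - F p.2))) ∂(μ.prod μ) ≤
      ENNReal.ofReal (exp ((l * π / 2) ^ 2 * v / 2)) := by
  set K := ∫⁻ x, ENNReal.ofReal (exp (L x x)) ∂μ
  have hc : Tendsto (fun n : ℕ => l * π ^ 2 / 8 / n) atTop (𝓝 0) :=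
    tendsto_const_div_atTop_nhds_zero_nat _
  have hlim : Tendsto (fun n : ℕ => ENNReal.ofReal (exp ((l * π / 2) ^ 2 * v / 2)) *
      (1 + ENNReal.ofReal (l * π ^ 2 / 8 / n) * K)) atTop
      (𝓝 (ENNReal.ofReal (exp ((l * π / 2) ^ 2 * v / 2)) * (1 + ENNReal.ofReal 0 * K))) :=
    ENNReal.Tendsto.const_mul (.const_add 1 (ENNReal.Tendsto.mul_const
      (ENNReal.tendsto_ofReal hc) (.inr hexp))) (.inr ENNReal.ofReal_ne_top)
  rw [ENNReal.ofReal_zero, zero_mul, add_zero, mul_one] at hlim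
  refine ge_of_tendsto hlim ?_
  filter_upwards [eventually_ne_atTop 0, hc.eventually_le_const one_pos] with n hn hc1
  have htδ : n * l * (π / (2 * n)) = l * π / 2 := by field_simp
  have htδ2 : n * l * (π / (2 * n)) ^ 2 / 2 = l * π ^ 2 / 8 / n := by field_simp; norm_num
  calc ∫⁻ p, ENNReal.ofReal (exp (l * (F p.1 - F p.2))) ∂(μ.prod μ)
      ≤ ∫⁻ p, ENNReal.ofReal (exp (n * l *
          (F p.1 - F (cos (π / (2 * n)) • p.1 + sin (π / (2 * n)) • p.2)))) ∂(μ.prod μ) :=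
        lintegral_exp_sub_le_lintegral_exp_sub_rotation
          (IsGaussian.map_rotation_eq_self_of_forall_strongDual_eq_zero hμ) hF l hn
    _ ≤ _ := by
        rw [← htδ2] at hc1
        simpa only [htδ, htδ2] using
          lintegral_exp_sub_rotation_le hμ hFL hv hL (by positivity) hc1

theorem measure_mul_measure_le_exp_of_forall_le_sub (hμ : ∀ L : StrongDual ℝ E, μ[L] = 0)
    {F : E → ℝ} (hF : Measurable F) {L : E → StrongDual ℝ E}
    (hFL : ∀ x y, F x - F y ≤ L x (x - y)) {v : ℝ}
    (hv : ∀ x, covarianceBilinDual μ (L x) (L x) ≤ v)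
    (hL : Measurable fun p : E × E => L p.1 p.2)
    (hexp : ∫⁻ x, ENNReal.ofReal (exp (L x x)) ∂μ ≠ ∞) {M : ℝ} (hM : 0 ≤ M) {A B : Set E}
    (hAB : ∀ x ∈ A, ∀ y ∈ B, M ≤ F x - F y) :
    μ A * μ B ≤ ENNReal.ofReal (exp (-(2 * M ^ 2 / (π ^ 2 * v)))) := by
  have hv0 : 0 ≤ v := (covarianceBilinDual_self_nonneg _).trans (hv 0)
  -- The minimiser of the exponent `(l * π / 2) ^ 2 * v / 2 - l * M`.
  set l := 4 * M / (π ^ 2 * v) with hl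
  have hl0 : 0 ≤ l := by positivity
  have hsub : A ×ˢ B ⊆ {p | 1 ≤ ENNReal.ofReal (exp (-(l * M))) *
      ENNReal.ofReal (exp (l * (F p.1 - F p.2)))} := by
    rintro p ⟨hx, hy⟩
    rw [mem_ofPred_eq, ← ENNReal.ofReal_mul (exp_pos _).le, ← exp_add, ENNReal.one_le_ofReal,
      one_le_exp_iff]
    linarith [mul_le_mul_of_nonneg_left (hAB _ hx _ hy) hl0]
  calc μ A * μ B = μ.prod μ (A ×ˢ B) := (Measure.prod_prod A B).symm
    _ ≤ ∫⁻ p, ENNReal.ofReal (exp (-(l * M))) *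
          ENNReal.ofReal (exp (l * (F p.1 - F p.2))) ∂(μ.prod μ) := by
        refine (measure_mono hsub).trans ?_
        simpa using mul_meas_ge_le_lintegral (μ := μ.prod μ) (by fun_prop) 1
    _ ≤ ENNReal.ofReal (exp (-(l * M))) * ENNReal.ofReal (exp ((l * π / 2) ^ 2 * v / 2)) := by
        rw [lintegral_const_mul _ (by fun_prop)]
        gcongr
        exact lintegral_exp_sub_le hμ hF hFL hv hL hexp hl0
    _ = ENNReal.ofReal (exp (-(2 * M ^ 2 / (π ^ 2 * v)))) := by
        rw [← ENNReal.ofReal_mul (exp_pos _).le, ← exp_add]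
        congr 2
        rcases eq_or_ne v 0 with rfl | hv
        · simp [hl]
        · rw [hl]
          field_simp
          ring

end Concentration

section Family

variable {E : Type*} [NormedAddCommGroup E] [NormedSpace ℝ E] [CompleteSpace E]
  [SecondCountableTopology E] [MeasurableSpace E] [BorelSpace E] {μ : Measure E} [IsGaussian μ]

lemma measure_exists_lt_mul_measure_forall_le_le_of_finite
    (hμ : ∀ L : StrongDual ℝ E, μ[L] = 0) {ι : Type*} [Finite ι] {Z : ι → StrongDual ℝ E}
    {v : ℝ} (hv : ∀ i, covarianceBilinDual μ (Z i) (Z i) ≤ v) (a : ι → ℝ) {M : ℝ} (hM : 0 ≤ M) :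
    μ {x | ∃ i, a i + M < Z i x} * μ {x | ∀ i, Z i x ≤ a i} ≤
      ENNReal.ofReal (exp (-(2 * M ^ 2 / (π ^ 2 * v)))) := by
  have := Fintype.ofFinite ι
  let _ : MeasurableSpace ι := ⊤
  rcases isEmpty_or_nonempty ι with _ | _
  · simp
  obtain ⟨i, hi, hmax⟩ := exists_measurable_forall_le (F := fun j x => Z j x - a j)
    fun j => by fun_prop
  have hZ : Measurable fun q : ι × E => Z q.1 q.2 :=
    measurable_from_prod_countable_right fun j => (Z j).measurable
  have hdiag : Measurable fun x => Z (i x) x := hZ.comp (hi.prodMk measurable_id)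
  have hexp : ∫⁻ x, ENNReal.ofReal (exp (Z (i x) x)) ∂μ ≠ ∞ := by
    refine ne_top_of_le_ne_top (b := ∑ j, ∫⁻ x, ENNReal.ofReal (exp (Z j x)) ∂μ) ?_ ?_
    · simp [lintegral_exp_strongDual]
    · rw [← lintegral_finsetSum _ fun j _ => by fun_prop]
      exact lintegral_mono fun x => Finset.single_le_sum
        (f := fun j => ENNReal.ofReal (exp (Z j x))) (fun _ _ => zero_le) (Finset.mem_univ (i x))
  refine measure_mul_measure_le_exp_of_forall_le_sub hμ (F := fun x => Z (i x) x - a (i x))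
    (L := fun x => Z (i x)) (hdiag.sub ((measurable_of_finite a).comp hi)) (fun x y => ?_)
    (fun x => hv (i x)) (hZ.comp ((hi.comp measurable_fst).prodMk measurable_snd)) hexp hM ?_
  · rw [map_sub]
    linarith [hmax y (i x)]
  · rintro x ⟨j, hj⟩ y hy
    linarith [hmax x j, hy (i y)]

theorem measure_exists_lt_mul_measure_forall_le_le (hμ : ∀ L : StrongDual ℝ E, μ[L] = 0)
    {ι : Type*} {Z : ι → StrongDual ℝ E} {v : ℝ}
    (hv : ∀ i, covarianceBilinDual μ (Z i) (Z i) ≤ v) (a : ι → ℝ) {M : ℝ} (hM : 0 ≤ M) :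
    μ {x | ∃ i, a i + M < Z i x} * μ {x | ∀ i, Z i x ≤ a i} ≤
      ENNReal.ofReal (exp (-(2 * M ^ 2 / (π ^ 2 * v)))) := by
  have hopen (i : ι) : IsOpen {x | a i + M < Z i x} := isOpen_lt (by fun_prop) (by fun_prop)
  rw [ofPred_exists, (isOpen_iUnion hopen).measurableSet.measure_eq_iSup_isCompact]
  simp only [ENNReal.iSup_mul, iSup_le_iff]
  intro K hKU hK
  obtain ⟨s, hs⟩ := hK.elim_finite_subcover _ hopen hKU
  calc μ K * μ {x | ∀ i, Z i x ≤ a i}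
      ≤ μ {x | ∃ i : s, a i + M < Z i x} * μ {x | ∀ i : s, Z i x ≤ a i} :=
        mul_le_mul' (measure_mono fun x hx => by simpa using hs hx)
          (measure_mono fun x hx i => hx i)
    _ ≤ _ := measure_exists_lt_mul_measure_forall_le_le_of_finite hμ (fun i : s => hv i) _ hM

theorem measure_compl_cthickening_cameronMartinBall_mul_le
    (hμ : ∀ L : StrongDual ℝ E, μ[L] = 0) {r ε : ℝ} (hr : 0 ≤ r) (hε : 0 ≤ ε) :
    μ (cthickening ε (cameronMartinBall μ r))ᶜ * μ (closedBall 0 ε) ≤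
      ENNReal.ofReal (exp (-(2 * r ^ 2 / π ^ 2))) := by
  rw [← mul_one (π ^ 2)]
  refine le_trans ?_ (measure_exists_lt_mul_measure_forall_le_le hμ
    (Z := fun L : {L : StrongDual ℝ E // covarianceBilinDual μ L L ≤ 1} => L.1) (fun L => L.2)
    (fun L => ε * ‖L.1‖) hr)
  gcongr
  · intro x hx
    obtain ⟨L, hL, hLx⟩ := exists_strongDual_lt_of_notMem_cthickening IsGaussian.memLp_two_id hε hx
    exact ⟨⟨L, hL⟩, hLx⟩
  · intro x hx L
    rw [mem_closedBall_zero_iff] at hx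
    calc L.1 x ≤ ‖L.1‖ * ‖x‖ := (le_abs_self _).trans (L.1.le_opNorm x)
      _ ≤ ε * ‖L.1‖ := by rw [mul_comm]; gcongr

end Family

section Covering

variable {X : Type*} [PseudoMetricSpace X]

lemma packingNumber_two_mul_mul_le_measure_univ [MeasurableSpace X] [OpensMeasurableSpace X]
    {μ : Measure X} {r : ℝ≥0} {c : ℝ≥0∞} {K : Set X} (h : ∀ x ∈ K, c ≤ μ (closedBall x r)) :
    (packingNumber (2 * r) K : ℝ≥0∞) * c ≤ μ univ := by
  simp only [packingNumber, ENat.toENNReal_iSup, ENNReal.iSup_mul, iSup_le_iff]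
  intro C hCK hC
  have hdisj : Pairwise (Function.onFun Disjoint fun x : C => closedBall (x : X) r) := by
    intro x y hxy
    have hsep : ((2 * r : ℝ≥0) : ℝ≥0∞) < edist (x : X) y :=
      hC x.2 y.2 (Subtype.coe_injective.ne hxy)
    rw [edist_nndist, ENNReal.coe_lt_coe, ← NNReal.coe_lt_coe, coe_nndist] at hsep
    push_cast at hsep
    exact closedBall_disjoint_closedBall (by linarith)
  calc (C.encard : ℝ≥0∞) * c = ∑' _ : C, c := (ENNReal.tsum_set_const C c).symm
    _ ≤ ∑' x : C, μ (closedBall (x : X) r) := ENNReal.tsum_le_tsum fun x => h x (hCK x.2)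
    _ ≤ μ (⋃ x : C, closedBall (x : X) r) :=
        tsum_meas_le_meas_iUnion_of_disjoint μ (fun _ => measurableSet_closedBall) hdisj
    _ ≤ μ univ := measure_mono (subset_univ _)

lemma externalCoveringNumber_add_cthickening_le (δ ε : ℝ≥0) (K : Set X) :
    externalCoveringNumber (δ + ε) (cthickening ε K) ≤ externalCoveringNumber δ K := by
  refine le_iInf₂ fun C hC => ?_
  rcases C.finite_or_infinite with hfin | hinf
  · refine IsCover.externalCoveringNumber_le_encard (isCover_iff_subset_iUnion_closedBall.2 ?_)
    have hKC : K ⊆ cthickening δ C := by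
      rw [hfin.isCompact.cthickening_eq_biUnion_closedBall δ.coe_nonneg]
      exact isCover_iff_subset_iUnion_closedBall.1 hC
    rw [← hfin.isCompact.cthickening_eq_biUnion_closedBall (δ + ε).coe_nonneg, add_comm,
      NNReal.coe_add]
    exact (cthickening_subset_of_subset _ hKC).trans
      (cthickening_cthickening_subset ε.coe_nonneg δ.coe_nonneg C)
  · simp [hinf.encard_eq]

lemma externalCoveringNumber_cthickening_mul_le_measure_univ [MeasurableSpace X]
    [OpensMeasurableSpace X] {μ : Measure X} {r : ℝ≥0} {c : ℝ≥0∞} {K : Set X}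
    (h : ∀ x ∈ K, c ≤ μ (closedBall x r)) (ε : ℝ≥0) :
    (externalCoveringNumber (2 * r + ε) (cthickening ε K) : ℝ≥0∞) * c ≤ μ univ := by
  refine le_trans ?_ (packingNumber_two_mul_mul_le_measure_univ h)
  gcongr
  exact (externalCoveringNumber_add_cthickening_le _ _ _).trans
    ((externalCoveringNumber_le_coveringNumber _ _).trans (coveringNumber_le_packingNumber _ _))

end Covering

lemma covN_le_externalCoveringNumber {E : Type*} [NormedAddCommGroup E] (ε : ℝ≥0) (B : Set E) :
    covN ε B ≤ externalCoveringNumber ε B := by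
  refine le_iInf₂ fun C hC => ?_
  rcases C.finite_or_infinite with hfin | hinf
  · refine iInf₂_le_of_le hfin.toFinset (fun x hx => ?_) hfin.encard_eq_coe_toFinset_card.ge
    simpa [mem_closedBall, dist_eq_norm] using isCover_iff_subset_iUnion_closedBall.1 hC hx
  · simp [hinf.encard_eq]

section ThickenedBall

lemma ne_top_and_ofReal_exp_sub_le_of_add_ofReal_neg_log_le {I p : ℝ≥0∞} {γ : ℝ} (hγ : 0 ≤ γ)
    (hp0 : p ≠ 0) (hp : p ≠ ∞) (h : I + ENNReal.ofReal (-log p.toReal) ≤ ENNReal.ofReal γ) :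
    I ≠ ∞ ∧ ENNReal.ofReal (exp (I.toReal - γ)) ≤ p := by
  have hI : I ≠ ∞ := ne_top_of_le_ne_top ENNReal.ofReal_ne_top (le_self_add.trans h)
  refine ⟨hI, ENNReal.ofReal_le_of_le_toReal ?_⟩
  rw [← le_log_iff_exp_le (ENNReal.toReal_pos hp0 hp)]
  have hreal := ENNReal.toReal_mono ENNReal.ofReal_ne_top h
  rw [ENNReal.toReal_add hI ENNReal.ofReal_ne_top, ENNReal.toReal_ofReal hγ,
    ENNReal.toReal_ofReal'] at hreal
  linarith [le_max_left (-log p.toReal) 0]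

lemma le_ofReal_exp_sub_of_mul_ofReal_exp_le {x : ℝ≥0∞} {a b : ℝ}
    (h : x * ENNReal.ofReal (exp a) ≤ ENNReal.ofReal (exp b)) :
    x ≤ ENNReal.ofReal (exp (b - a)) := by
  rw [exp_sub, ENNReal.ofReal_div_of_pos (exp_pos a)]
  exact (ENNReal.le_div_iff_mul_le (.inl (ENNReal.ofReal_pos.2 (exp_pos a)).ne')
    (.inl ENNReal.ofReal_ne_top)).2 h

variable {E : Type*} [NormedAddCommGroup E] [NormedSpace ℝ E] [MeasurableSpace E] [BorelSpace E]
  {μ : Measure E}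

lemma IsCenteredGaussian.isGaussian (hG : IsCenteredGaussian μ) : IsGaussian μ :=
  isGaussian_of_map_eq_gaussianReal fun L => ⟨0, hG.2 L⟩

lemma IsCenteredGaussian.integral_strongDual (hG : IsCenteredGaussian μ) (L : StrongDual ℝ E) :
    μ[L] = 0 := by
  obtain ⟨v, hv⟩ := hG.2 L
  calc μ[L] = ∫ y, y ∂(μ.map L) :=
        (integral_map L.continuous.aemeasurable aestronglyMeasurable_id).symm
    _ = 0 := by rw [hv, integral_id_gaussianReal]

variable [CompleteSpace E] [SecondCountableTopology E] [IsGaussian μ] {ε s : ℝ}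

theorem covN_cthickening_cameronMartinBall_le (hμ : ∀ L : StrongDual ℝ E, μ[L] = 0)
    (hε : 0 ≤ ε) (hs : ENNReal.ofReal (exp (-s)) ≤ μ (closedBall 0 ε)) (r : ℝ) :
    (covN (3 * ε) (cthickening ε (cameronMartinBall μ r)) : ℝ≥0∞) ≤
      ENNReal.ofReal (exp (r ^ 2 / 2 + s)) := by
  lift ε to ℝ≥0 using hε
  have hmass : ∀ x ∈ cameronMartinBall μ r,
      ENNReal.ofReal (exp (-(r ^ 2 / 2 + s))) ≤ μ (closedBall x ε) := fun x hx =>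
    calc ENNReal.ofReal (exp (-(r ^ 2 / 2 + s)))
        = ENNReal.ofReal (exp (-r ^ 2 / 2)) * ENNReal.ofReal (exp (-s)) := by
          rw [← ENNReal.ofReal_mul (exp_nonneg _), ← exp_add]
          ring_nf
      _ ≤ ENNReal.ofReal (exp (-r ^ 2 / 2)) * μ (closedBall 0 ε) := by gcongr
      _ ≤ μ (closedBall x ε) :=
          ofReal_exp_mul_le_measure_closedBall_of_mem_closure hμ (subset_closure hx) ε
  refine (le_ofReal_exp_sub_of_mul_ofReal_exp_le (a := -(r ^ 2 / 2 + s)) (b := 0) ?_).trans_eq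
    (by rw [zero_sub, neg_neg])
  calc _ ≤ (externalCoveringNumber (2 * ε + ε) (cthickening ε (cameronMartinBall μ r)) : ℝ≥0∞) *
        ENNReal.ofReal (exp (-(r ^ 2 / 2 + s))) := by
        gcongr
        rw [show (3 * ε : ℝ) = (2 * ε + ε : ℝ≥0) by push_cast; ring]
        exact covN_le_externalCoveringNumber _ _
    _ ≤ μ univ := externalCoveringNumber_cthickening_mul_le_measure_univ hmass ε
    _ = ENNReal.ofReal (exp 0) := by simp

theorem measure_compl_cthickening_cameronMartinBall_le (hμ : ∀ L : StrongDual ℝ E, μ[L] = 0)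
    (hε : 0 ≤ ε) (hs : ENNReal.ofReal (exp (-s)) ≤ μ (closedBall 0 ε)) {r : ℝ} (hr : 0 ≤ r) :
    μ (cthickening ε (cameronMartinBall μ r))ᶜ ≤
      ENNReal.ofReal (exp (-(2 * r ^ 2 / π ^ 2) + s)) := by
  rw [← sub_neg_eq_add]
  refine le_ofReal_exp_sub_of_mul_ofReal_exp_le ?_
  grw [hs]
  exact measure_compl_cthickening_cameronMartinBall_mul_le hμ hr hε

theorem ofReal_exp_neg_le_measure_closedBall_add (hμ : ∀ L : StrongDual ℝ E, μ[L] = 0)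
    {f : E} {δ : ℝ} (hI : ⨅ h ∈ {h : E | ‖h - f‖ ≤ δ}, cmNormSq μ h ≠ ∞)
    (hs : ENNReal.ofReal (exp ((⨅ h ∈ {h : E | ‖h - f‖ ≤ δ}, cmNormSq μ h).toReal - s)) ≤
      μ (closedBall 0 ε)) :
    ENNReal.ofReal (exp (-s)) ≤ μ (closedBall f (δ + ε)) := by
  refine le_trans ?_ (ofReal_exp_mul_le_measure_closedBall_of_iInf_cmNormSq hμ hI ε)
  grw [← hs]
  rw [← ENNReal.ofReal_mul (exp_nonneg _), ← exp_add]
  gcongr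
  linarith [(⨅ h ∈ {h : E | ‖h - f‖ ≤ δ}, cmNormSq μ h).toReal_nonneg]

end ThickenedBall

theorem stmt_11_general {E : Type*} [NormedAddCommGroup E] [NormedSpace ℝ E] [CompleteSpace E]
    [TopologicalSpace.SeparableSpace E] [MeasurableSpace E] [BorelSpace E]
    (μ : Measure E) (hG : IsCenteredGaussian μ) (f : E) (ε γ : ℝ) (hε : 0 < ε) (hγ : 0 ≤ γ)
    (hcond : (⨅ h ∈ {h : E | ‖h - f‖ ≤ ε}, cmNormSq μ h) +
        ENNReal.ofReal (-Real.log ((μ {x | ‖x‖ ≤ ε}).toReal)) ≤ ENNReal.ofReal γ)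
    (Cs : ℝ) (hCs : 1 ≤ Cs) :
    ∃ B : Set E, MeasurableSet B ∧
      (covN (3 * ε) B : ℝ≥0∞) ≤ ENNReal.ofReal (Real.exp (6 * Cs * γ)) ∧
      μ Bᶜ ≤ ENNReal.ofReal (Real.exp (-Cs * γ)) ∧
      ENNReal.ofReal (Real.exp (-γ)) ≤ μ {x | ‖x - f‖ ≤ 2 * ε} := by
  have := UniformSpace.secondCountable_of_separable E
  have := hG.isGaussian
  have hμ := hG.integral_strongDual
  rw [show {x : E | ‖x‖ ≤ ε} = closedBall 0 ε by ext; simp] at hcond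
  obtain ⟨hI, hlog⟩ := ne_top_and_ofReal_exp_sub_le_of_add_ofReal_neg_log_le hγ
    ((measure_ball_zero_pos hμ hε).trans_le (measure_mono ball_subset_closedBall)).ne'
    (measure_ne_top _ _) hcond
  have hsmall : ENNReal.ofReal (exp (-γ)) ≤ μ (closedBall 0 ε) :=
    le_trans (by gcongr; simp) hlog
  -- The radius that makes the concentration exponent `2 * r ^ 2 / π ^ 2` equal to `2 * (Cs * γ)`.
  have hr : (π * √(Cs * γ)) ^ 2 = π ^ 2 * (Cs * γ) := by rw [mul_pow, sq_sqrt (by positivity)]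
  have hCγ : γ ≤ Cs * γ := le_mul_of_one_le_left hγ hCs
  refine ⟨cthickening ε (cameronMartinBall μ (π * √(Cs * γ))), isClosed_cthickening.measurableSet,
    (covN_cthickening_cameronMartinBall_le hμ hε.le hsmall _).trans ?_,
    (measure_compl_cthickening_cameronMartinBall_le hμ hε.le hsmall (by positivity)).trans ?_, ?_⟩
  · gcongr
    rw [hr]
    have : π ^ 2 ≤ 10 := by nlinarith [pi_lt_d2, pi_pos]
    nlinarith
  · gcongr
    rw [hr, mul_div_assoc, mul_div_cancel_left₀ _ (by positivity)]
    linarith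
  · rw [show {x | ‖x - f‖ ≤ 2 * ε} = closedBall f (ε + ε) by ext; simp [dist_eq_norm, two_mul]]
    exact ofReal_exp_neg_le_measure_closedBall_add hμ hI hlog

/-- Theorem 2.1 of van der Vaart–van Zanten, generalised form.
Let `X` be a Borel-measurable zero-mean Gaussian random element of a separable Banach space
`(𝔹, ‖·‖)` with RKHS `(ℍ, ‖·‖_ℍ)`, and `f` in the closure of `ℍ` in `𝔹`. If `ε > 0` and
`γ ≥ 1` satisfy `inf_{h : ‖h-f‖ ≤ ε} ‖h‖²_ℍ - log ℙ(‖X‖ ≤ ε) ≤ γ`, then for any `C⋆ ≥ 1`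
there is a Borel set `B ⊆ 𝔹` with `log N(3ε, B, ‖·‖) ≤ 6C⋆γ`, `ℙ(X ∉ B) ≤ e^{-C⋆γ}` and
`ℙ(‖X - f‖ ≤ 2ε) ≥ e^{-γ}`. -/
theorem stmt_11 {E : Type*} [NormedAddCommGroup E] [NormedSpace ℝ E] [CompleteSpace E]
    [TopologicalSpace.SeparableSpace E] [MeasurableSpace E] [BorelSpace E]
    (μ : Measure E) (hG : IsCenteredGaussian μ) (f : E)
    (hf : f ∈ closure {h : E | cmNormSq μ h ≠ ∞})
    (ε γ : ℝ) (hε : 0 < ε) (hγ : 1 ≤ γ)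
    (hcond : (⨅ h ∈ {h : E | ‖h - f‖ ≤ ε}, cmNormSq μ h) +
        ENNReal.ofReal (-Real.log ((μ {x | ‖x‖ ≤ ε}).toReal)) ≤ ENNReal.ofReal γ)
    (Cs : ℝ) (hCs : 1 ≤ Cs) :
    ∃ B : Set E, MeasurableSet B ∧
      (covN (3 * ε) B : ℝ≥0∞) ≤ ENNReal.ofReal (Real.exp (6 * Cs * γ)) ∧
      μ Bᶜ ≤ ENNReal.ofReal (Real.exp (-Cs * γ)) ∧
      ENNReal.ofReal (Real.exp (-γ)) ≤ μ {x | ‖x - f‖ ≤ 2 * ε} :=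
  stmt_11_general μ hG f ε γ hε (zero_le_one.trans hγ) hcond Cs hCs

end
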